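/- There is a universal constant C such that the following holds. Let d ≥ 1, set D = (2d+1)², let r₀ : ℝ^n → ℝ be a polynomial of degree at most 2d with r₀(x) ≥ 0 for all x, let a, b ≥ 0 with a + b = 1 and b ≤ 1/(C·d^{10}), and for 1 ≤ j ≤ D set r_j = U_{a^{j/2}} r₀. Suppose x ∈ ℝ^n is a point such that r_j(x) ≈_γ r_{j+1}(x) for all 1 ≤ j ≤ D−1, where 0 ≤ γ ≤ 1/(12·D·(2d+1)). Then r₀(x) ≈_1 r₁(x), i.e., e^{−1} ≤ r₀(x)/r₁(x) ≤ e (or both values are 0). -/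

import Mathlib

open MeasureTheory ProbabilityTheory MvPolynomial

/-- The standard Gaussian measure `N(0,1)^n` on `ℝ^n`. -/
noncomputable def gaussianN (n : ℕ) : Measure (Fin n → ℝ) :=
  Measure.pi fun _ => gaussianReal 0 1

/-- The normalized probabilists' Hermite polynomial `h_k = H_k / √(k!)`. -/
noncomputable def hermiteFn (k : ℕ) (t : ℝ) : ℝ :=
  ((Polynomial.hermite k).map (Int.castRingHom ℝ)).eval t / Real.sqrt (Nat.factorial k)

/-- The multivariate Hermite polynomial `h_α(x) = ∏ i, h_{α i}(x i)`. -/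
noncomputable def hermiteMv {n : ℕ} (α : Fin n → ℕ) (x : Fin n → ℝ) : ℝ :=
  ∏ i, hermiteFn (α i) (x i)

/-- Hermite coefficient `f̂(α) = E_{x ∼ N(0,1)^n}[f(x)·h_α(x)]` of a function. -/
noncomputable def hermiteCoeffF {n : ℕ} (f : (Fin n → ℝ) → ℝ) (α : Fin n → ℕ) : ℝ :=
  ∫ x, f x * hermiteMv α x ∂(gaussianN n)

/-- Hermite coefficient `ĝ(α)` of a polynomial. -/
noncomputable def hermiteCoeff {n : ℕ} (g : MvPolynomial (Fin n) ℝ) (α : Fin n → ℕ) : ℝ :=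
  hermiteCoeffF (fun x => eval x g) α

/-- The squared Gaussian 2-norm `‖g‖₂² = E_{x ∼ N(0,1)^n}[g(x)²]`. -/
noncomputable def norm2sq {n : ℕ} (g : MvPolynomial (Fin n) ℝ) : ℝ :=
  ∫ x, (eval x g) ^ 2 ∂(gaussianN n)

/-- The `λ`-zoom of `g` at `x`: `g_{λ|x}(y) = g(√(1-λ)·x + √λ·y)`, as a polynomial in `y`. -/
noncomputable def zoom {n : ℕ} (g : MvPolynomial (Fin n) ℝ) (lam : ℝ) (x : Fin n → ℝ) :
    MvPolynomial (Fin n) ℝ :=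
  aeval (fun i => C (Real.sqrt (1 - lam) * x i) + C (Real.sqrt lam) * X i) g

/-- `HyperVar_R[g^{≥m}] = Σ_{|α| ≥ m} R^{2|α|}·ĝ(α)²`. -/
noncomputable def hyperVarGE {n : ℕ} (R : ℝ) (m : ℕ) (g : MvPolynomial (Fin n) ℝ) : ℝ :=
  ∑' α : Fin n → ℕ, if m ≤ ∑ i, α i then R ^ (2 * ∑ i, α i) * hermiteCoeff g α ^ 2 else 0

/-- `HyperVar_R[g] = Σ_{α ≠ 0} R^{2|α|}·ĝ(α)²`. -/
noncomputable def hyperVar {n : ℕ} (R : ℝ) (g : MvPolynomial (Fin n) ℝ) : ℝ :=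
  hyperVarGE R 1 g

/-- A nice distribution of polynomials of degree at most `d` on `ℝ^n`, indexed by
`υ ∈ ℝ^I`: each `g υ` has degree at most `d` and each coefficient of `g υ` is a
polynomial of degree at most `d` in `υ`. -/
def NiceFamily (n I d : ℕ) (g : (Fin I → ℝ) → MvPolynomial (Fin n) ℝ) : Prop :=
  (∀ υ, (g υ).totalDegree ≤ d) ∧
  ∀ m : Fin n →₀ ℕ, ∃ P : MvPolynomial (Fin I) ℝ,
    P.totalDegree ≤ d ∧ ∀ υ, coeff m (g υ) = eval υ P

/-- The Gaussian noise operator `U_ρ f = Σ_α ρ^{|α|}·f̂(α)·h_α`, applied to a function. -/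
noncomputable def noiseOpF {n : ℕ} (ρ : ℝ) (f : (Fin n → ℝ) → ℝ) (x : Fin n → ℝ) : ℝ :=
  ∑' α : Fin n → ℕ, ρ ^ (∑ i, α i) * hermiteCoeffF f α * hermiteMv α x

/-- The Gaussian noise operator applied to a polynomial. -/
noncomputable def noiseOpP {n : ℕ} (ρ : ℝ) (g : MvPolynomial (Fin n) ℝ) :
    (Fin n → ℝ) → ℝ :=
  noiseOpF ρ (fun x => eval x g)

/-- `a ≈_ν b`: either both are zero, or they have the same sign and
`e^{-ν} ≤ a/b ≤ e^ν`. -/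
def MulClose (ν a b : ℝ) : Prop :=
  (a = 0 ∧ b = 0) ∨ (0 < a * b ∧ Real.exp (-ν) ≤ a / b ∧ a / b ≤ Real.exp ν)

/-
At a fixed point `x`, orthonormality of the Hermite polynomials makes `ρ ↦ U_ρ r₀(x)` a polynomial
`q` of degree at most `2d` with `q(1) = r₀(x)`. With `z = √a` and `M = 2d + 1`, the hypothesis says
that `q` is nearly constant along `z, z², …, z^(M²)`. Lagrange interpolation at the `M` nodes
`z^(k²)`, `1 ≤ k ≤ M`, extrapolates this to `1 = z⁰`: the quadratic spacing of the exponents keeps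
each basis polynomial bounded at `1` by `∏_{l ≠ k} l² / |l² - k²| = 2 (M!)² / ((M-k)! (M+k)!) ≤ 2`
up to a power of `z⁻¹`, and `b` is small enough for that power to be at most `2`.
-/

section GaussianIntegrationByParts

open scoped NNReal

variable {E : Type*} [NormedAddCommGroup E] [NormedSpace ℝ E] {μ : ℝ} {v : ℝ≥0}

lemma hasDerivAt_gaussianPDFReal (μ : ℝ) (v : ℝ≥0) (x : ℝ) :
    HasDerivAt (gaussianPDFReal μ v) (-((x - μ) / v) * gaussianPDFReal μ v x) x := by
  have hexponent : HasDerivAt (fun y => -(y - μ) ^ 2 / (2 * v)) (-((x - μ) / v)) x :=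
    ((((hasDerivAt_id x).sub_const μ).pow 2).neg.div_const (2 * (v : ℝ))).congr_deriv <| by
      simp [mul_div_mul_left, neg_div]
  rw [gaussianPDFReal_def]
  exact (hexponent.exp.const_mul _).congr_deriv (by ring)

lemma integrable_gaussianReal_iff_integrable_smul {f : ℝ → E} (hv : v ≠ 0) :
    Integrable f (gaussianReal μ v) ↔ Integrable fun x => gaussianPDFReal μ v x • f x := by
  rw [gaussianReal_of_var_ne_zero _ hv, integrable_withDensity_iff_integrable_smul'
    (measurable_gaussianPDF μ v) (ae_of_all _ fun _ => gaussianPDF_lt_top)]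
  simp only [toReal_gaussianPDF]

lemma integral_sub_smul_gaussianReal {f f' : ℝ → E} (hderiv : ∀ x, HasDerivAt f (f' x) x)
    (hf : Integrable f (gaussianReal μ v)) (hf' : Integrable f' (gaussianReal μ v))
    (hxf : Integrable (fun x => (x - μ) • f x) (gaussianReal μ v)) :
    ∫ x, (x - μ) • f x ∂gaussianReal μ v = (v : ℝ) • ∫ x, f' x ∂gaussianReal μ v := by
  rcases eq_or_ne v 0 with rfl | hv
  · rw [NNReal.coe_zero, zero_smul, gaussianReal_zero_var]
    exact integral_eq_zero_of_ae (by simp [ae_dirac_eq, Filter.EventuallyEq])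
  have hdiff : Integrable (fun x => f' x - (v : ℝ)⁻¹ • (x - μ) • f x) (gaussianReal μ v) :=
    hf'.sub (hxf.smul _)
  have hzero : ∫ x, f' x - (v : ℝ)⁻¹ • (x - μ) • f x ∂gaussianReal μ v = 0 := by
    rw [integral_gaussianReal_eq_integral_smul hv]
    refine integral_eq_zero_of_hasDerivAt_of_integrable (fun x => ?_)
      ((integrable_gaussianReal_iff_integrable_smul hv).1 hdiff)
      ((integrable_gaussianReal_iff_integrable_smul hv).1 hf)
    refine ((hasDerivAt_gaussianPDFReal μ v x).smul (hderiv x)).congr_deriv ?_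
    module
  rw [integral_sub hf' (by exact hxf.smul _), integral_smul, sub_eq_zero] at hzero
  rw [hzero, smul_inv_smul₀ (NNReal.coe_ne_zero.2 hv)]

lemma integrable_eval_gaussianReal (p : Polynomial ℝ) :
    Integrable (fun x => p.eval x) (gaussianReal μ v) := by
  induction p using Polynomial.induction_on' with
  | add p q hp hq =>
    simp only [Polynomial.eval_add]
    exact hp.add hq
  | monomial k c =>
    have hpow : Integrable (fun x : ℝ => x ^ k) (gaussianReal μ v) := by
      have hnorm := (memLp_id_gaussianReal' (μ := μ) (v := v) k (by simp)).integrable_norm_pow'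
      exact (integrable_norm_iff (by fun_prop)).1 (by simpa using hnorm)
    simpa only [Polynomial.eval_monomial] using hpow.const_mul c

lemma integral_eval_X_sub_C_mul_gaussianReal (p : Polynomial ℝ) :
    ∫ x, ((Polynomial.X - Polynomial.C μ) * p).eval x ∂gaussianReal μ v =
      v * ∫ x, p.derivative.eval x ∂gaussianReal μ v := by
  have hprod := integrable_eval_gaussianReal (μ := μ) (v := v)
    ((Polynomial.X - Polynomial.C μ) * p)
  simp only [Polynomial.eval_mul, Polynomial.eval_sub, Polynomial.eval_X,
    Polynomial.eval_C] at hprod ⊢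
  exact integral_sub_smul_gaussianReal p.hasDerivAt (integrable_eval_gaussianReal _)
    (integrable_eval_gaussianReal _) hprod

end GaussianIntegrationByParts

section HermiteOrthonormality

/-- The probabilists' Hermite polynomials `H_k` with real coefficients, as a polynomial sequence:
this is the form in which Mathlib provides their spanning properties. -/
noncomputable def realHermite : Polynomial.Sequence ℝ where
  elems' k := (Polynomial.hermite k).map (Int.castRingHom ℝ)
  degree_eq' k := by
    rw [(Polynomial.hermite_monic k).degree_map, Polynomial.degree_hermite]

lemma realHermite_zero : realHermite 0 = 1 := by
  change (Polynomial.hermite 0).map (Int.castRingHom ℝ) = 1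
  simp

lemma realHermite_succ (k : ℕ) :
    realHermite (k + 1) = Polynomial.X * realHermite k - (realHermite k).derivative := by
  change (Polynomial.hermite (k + 1)).map (Int.castRingHom ℝ) =
    Polynomial.X * (Polynomial.hermite k).map (Int.castRingHom ℝ) -
      ((Polynomial.hermite k).map (Int.castRingHom ℝ)).derivative
  simp [Polynomial.hermite_succ, Polynomial.derivative_map]

lemma monic_realHermite (k : ℕ) : (realHermite k).Monic :=
  (Polynomial.hermite_monic k).map _

lemma integral_eval_realHermite_mul (k : ℕ) (p : Polynomial ℝ) :
    ∫ x, (realHermite k * p).eval x ∂gaussianReal 0 1 =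
      ∫ x, (Polynomial.derivative^[k] p).eval x ∂gaussianReal 0 1 := by
  induction k generalizing p with
  | zero => simp [realHermite_zero]
  | succ k ih =>
    have hX := integral_eval_X_sub_C_mul_gaussianReal (μ := 0) (v := 1) (realHermite k * p)
    rw [map_zero, sub_zero, NNReal.coe_one, one_mul] at hX
    have hleft : realHermite (k + 1) * p =
        Polynomial.X * (realHermite k * p) - (realHermite k).derivative * p := by
      rw [realHermite_succ]; ring
    have hright : realHermite k * p.derivative =
        (realHermite k * p).derivative - (realHermite k).derivative * p := by
      rw [Polynomial.derivative_mul]; ring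
    rw [Function.iterate_succ_apply, ← ih, hleft, hright]
    simp only [Polynomial.eval_sub]
    rw [integral_sub (integrable_eval_gaussianReal _) (integrable_eval_gaussianReal _),
      integral_sub (integrable_eval_gaussianReal _) (integrable_eval_gaussianReal _), hX]

lemma iterate_derivative_eq_C_of_natDegree_le {R : Type*} [Semiring R] {p : Polynomial R} {k : ℕ}
    (hp : p.natDegree ≤ k) :
    Polynomial.derivative^[k] p = Polynomial.C (k.factorial • p.coeff k) := by
  have hdeg : (Polynomial.derivative^[k] p).natDegree = 0 := by
    have := Polynomial.natDegree_iterate_derivative p k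
    omega
  rw [Polynomial.eq_C_of_natDegree_eq_zero hdeg, Polynomial.coeff_iterate_derivative, zero_add,
    Nat.descFactorial_self]

lemma integral_eval_realHermite_mul_of_natDegree_le {k : ℕ} {p : Polynomial ℝ}
    (hp : p.natDegree ≤ k) :
    ∫ x, (realHermite k * p).eval x ∂gaussianReal 0 1 = k.factorial * p.coeff k := by
  rw [integral_eval_realHermite_mul, iterate_derivative_eq_C_of_natDegree_le hp]
  simp

lemma integral_eval_realHermite_mul_realHermite (j k : ℕ) :
    ∫ x, (realHermite j * realHermite k).eval x ∂gaussianReal 0 1 =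
      if j = k then (k.factorial : ℝ) else 0 := by
  wlog hkj : k ≤ j generalizing j k
  · rw [mul_comm, this k j (by omega)]
    grind
  rw [integral_eval_realHermite_mul_of_natDegree_le (by rwa [realHermite.natDegree_eq])]
  split_ifs with hjk
  · have hcoeff := (monic_realHermite k).coeff_natDegree
    rw [realHermite.natDegree_eq] at hcoeff
    rw [hjk, hcoeff, mul_one]
  · rw [Polynomial.coeff_eq_zero_of_natDegree_lt, mul_zero]
    rw [realHermite.natDegree_eq]
    omega

lemma hermiteFn_eq_eval_div (k : ℕ) (t : ℝ) :
    hermiteFn k t = (realHermite k).eval t / √k.factorial := rfl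

lemma hermiteFn_mul_hermiteFn (j k : ℕ) (t : ℝ) :
    hermiteFn j t * hermiteFn k t =
      (realHermite j * realHermite k).eval t / (√j.factorial * √k.factorial) := by
  rw [hermiteFn_eq_eval_div, hermiteFn_eq_eval_div, div_mul_div_comm, Polynomial.eval_mul]

lemma integrable_hermiteFn_mul (j k : ℕ) :
    Integrable (fun t => hermiteFn j t * hermiteFn k t) (gaussianReal 0 1) := by
  simpa only [hermiteFn_mul_hermiteFn] using (integrable_eval_gaussianReal _).div_const _

lemma integral_hermiteFn_mul (j k : ℕ) :
    ∫ t, hermiteFn j t * hermiteFn k t ∂gaussianReal 0 1 = if j = k then 1 else 0 := by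
  simp only [hermiteFn_mul_hermiteFn, integral_div, integral_eval_realHermite_mul_realHermite]
  split_ifs with hjk
  · rw [hjk, Real.mul_self_sqrt (Nat.cast_nonneg _), div_self (by positivity)]
  · exact zero_div _

variable {n : ℕ}

lemma integrable_hermiteMv_mul (α β : Fin n → ℕ) :
    Integrable (fun x => hermiteMv α x * hermiteMv β x) (gaussianN n) := by
  simp only [hermiteMv, ← Finset.prod_mul_distrib]
  exact Integrable.fintype_prod (f := fun i t => hermiteFn (α i) t * hermiteFn (β i) t)
    fun i => integrable_hermiteFn_mul _ _

lemma integral_hermiteMv_mul (α β : Fin n → ℕ) :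
    ∫ x, hermiteMv α x * hermiteMv β x ∂gaussianN n = if α = β then 1 else 0 := by
  simp only [hermiteMv, ← Finset.prod_mul_distrib, gaussianN]
  rw [integral_fintype_prod_eq_prod (f := fun i t => hermiteFn (α i) t * hermiteFn (β i) t)]
  simp only [integral_hermiteFn_mul, Finset.prod_ite_zero, Finset.prod_const_one, funext_iff,
    Finset.mem_univ, true_imp_iff]

end HermiteOrthonormality

section HermiteExpansion

lemma eval_mem_span_hermiteFn {p : Polynomial ℝ} {m : ℕ} (hp : p.natDegree ≤ m) :
    (fun t => p.eval t) ∈ Submodule.span ℝ (hermiteFn '' Set.Iic m) := by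
  let evalFn : Polynomial ℝ →ₗ[ℝ] ℝ → ℝ := LinearMap.pi Polynomial.leval
  have hspan : Submodule.span ℝ (realHermite '' Set.Iic m) ≤
      (Submodule.span ℝ (hermiteFn '' Set.Iic m)).comap evalFn := by
    rw [Submodule.span_le, Set.image_subset_iff]
    intro k hk
    have heval : evalFn (realHermite k) = √k.factorial • hermiteFn k := by
      ext t
      exact (mul_div_cancel₀ _ (by positivity)).symm
    rw [Set.mem_preimage, SetLike.mem_coe, Submodule.mem_comap, heval]
    exact Submodule.smul_mem _ _ (Submodule.subset_span ⟨k, hk, rfl⟩)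
  refine hspan (x := p) ?_
  rw [realHermite.span_degreeLE fun k _ => by simp [(monic_realHermite k).leadingCoeff],
    Polynomial.mem_degreeLE]
  exact Polynomial.natDegree_le_iff_degree_le.1 hp

variable {n : ℕ}

lemma prod_pow_mem_span_hermiteMv (s : Fin n → ℕ) :
    (fun x : Fin n → ℝ => ∏ i, x i ^ s i) ∈ Submodule.span ℝ (hermiteMv '' Set.Iic s) := by
  have hpow (m : ℕ) : ∃ c : ℕ → ℝ, ∑ k ∈ Finset.Iic m, c k • hermiteFn k = fun t => t ^ m := by
    rw [← Submodule.mem_span_image_finset_iff_exists_fun', Finset.coe_Iic]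
    simpa using eval_mem_span_hermiteFn (Polynomial.natDegree_X_pow_le (R := ℝ) m)
  choose c hc using hpow
  have hexpand : (fun x : Fin n → ℝ => ∏ i, x i ^ s i) =
      ∑ α ∈ Fintype.piFinset fun i => Finset.Iic (s i), (∏ i, c (s i) (α i)) • hermiteMv α := by
    ext x
    simp only [← congrFun (hc _) _, Finset.sum_apply, Pi.smul_apply, smul_eq_mul,
      Finset.prod_univ_sum, Finset.prod_mul_distrib, hermiteMv]
  rw [hexpand]
  refine Submodule.sum_mem _ fun α hα =>
    Submodule.smul_mem _ _ (Submodule.subset_span ⟨α, fun i => ?_, rfl⟩)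
  exact Finset.mem_Iic.1 (Fintype.mem_piFinset.1 hα i)

lemma eval_mem_span_hermiteMv {r : MvPolynomial (Fin n) ℝ} {m : ℕ} (hr : r.totalDegree ≤ m) :
    (fun x => eval x r) ∈ Submodule.span ℝ (hermiteMv '' {α | ∑ i, α i ≤ m}) := by
  have hexpand : (fun x => eval x r) =
      ∑ s ∈ r.support, r.coeff s • fun x : Fin n → ℝ => ∏ i, x i ^ s i := by
    ext x
    simp [eval_eq']
  rw [hexpand]
  refine Submodule.sum_mem _ fun s hs => Submodule.smul_mem _ _ ?_
  refine Submodule.span_mono (Set.image_mono fun α hα => ?_) (prod_pow_mem_span_hermiteMv s)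
  calc ∑ i, α i ≤ ∑ i, s i := Finset.sum_le_sum fun i _ => hα i
    _ = s.sum fun _ e => e := (s.sum_fintype (fun _ e => e) fun _ => rfl).symm
    _ ≤ r.totalDegree := le_totalDegree hs
    _ ≤ m := hr

lemma hermiteCoeffF_linearCombination (c : (Fin n → ℕ) →₀ ℝ) (β : Fin n → ℕ) :
    hermiteCoeffF (Finsupp.linearCombination ℝ hermiteMv c) β = c β := by
  simp only [hermiteCoeffF, Finsupp.linearCombination_apply, Finsupp.sum, Finset.sum_apply,
    Pi.smul_apply, smul_eq_mul, Finset.sum_mul, mul_assoc]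
  rw [integral_finsetSum _ fun α _ => (integrable_hermiteMv_mul α β).const_mul (c α)]
  simp [integral_const_mul, integral_hermiteMv_mul, eq_comm]

lemma noiseOpF_linearCombination (ρ : ℝ) (c : (Fin n → ℕ) →₀ ℝ) (x : Fin n → ℝ) :
    noiseOpF ρ (Finsupp.linearCombination ℝ hermiteMv c) x =
      c.sum fun α w => ρ ^ (∑ i, α i) * w * hermiteMv α x := by
  simp only [noiseOpF, hermiteCoeffF_linearCombination]
  exact tsum_eq_sum fun α hα => by rw [Finsupp.notMem_support_iff.1 hα, mul_zero, zero_mul]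

lemma exists_noiseOpP_eq_eval {r : MvPolynomial (Fin n) ℝ} {m : ℕ} (hr : r.totalDegree ≤ m)
    (x : Fin n → ℝ) :
    ∃ q : Polynomial ℝ, q.natDegree ≤ m ∧ q.eval 1 = eval x r ∧
      ∀ ρ, noiseOpP ρ r x = q.eval ρ := by
  obtain ⟨c, hc, hcr⟩ :=
    (Finsupp.mem_span_image_iff_linearCombination ℝ).1 (eval_mem_span_hermiteMv hr)
  refine ⟨c.sum fun α w => Polynomial.C (w * hermiteMv α x) * Polynomial.X ^ (∑ i, α i),
    ?_, ?_, fun ρ => ?_⟩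
  · exact Polynomial.natDegree_sum_le_of_forall_le _ _ fun α hα =>
      (Polynomial.natDegree_C_mul_X_pow_le _ _).trans (hc hα)
  · rw [← congrFun hcr x]
    simp [Finsupp.sum, Polynomial.eval_finsetSum, Finsupp.linearCombination_apply]
  · rw [noiseOpP, ← hcr, noiseOpF_linearCombination]
    simp only [Finsupp.sum, Polynomial.eval_finsetSum, Polynomial.eval_mul, Polynomial.eval_C,
      Polynomial.eval_pow, Polynomial.eval_X]
    exact Finset.sum_congr rfl fun α _ => by ring

end HermiteExpansion

section Extrapolation

open scoped Nat Polynomial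

lemma factorial_mul_factorial_le_factorial_sub_mul_factorial_add {k n : ℕ} (h : k ≤ n) :
    n ! * n ! ≤ (n - k)! * (n + k)! := by
  have hcentral := Nat.choose_mul_factorial_mul_factorial (Nat.le_mul_of_pos_left n two_pos)
  have hchoose := Nat.choose_mul_factorial_mul_factorial (by lia : n - k ≤ 2 * n)
  rw [show 2 * n - n = n by lia] at hcentral
  rw [show 2 * n - (n - k) = n + k by lia] at hchoose
  refine Nat.le_of_mul_le_mul_left ?_ (Nat.choose_pos (by lia : n - k ≤ 2 * n))
  calc (2 * n).choose (n - k) * (n ! * n !)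
      ≤ (2 * n).choose n * (n ! * n !) :=
        Nat.mul_le_mul_right _ (Nat.choose_le_centralBinom (n - k) n)
    _ = (2 * n).choose (n - k) * ((n - k)! * (n + k)!) := by
        rw [← mul_assoc, hcentral, ← mul_assoc, hchoose]

lemma prod_Icc_add_mul_factorial (k n : ℕ) : (∏ l ∈ Finset.Icc 1 n, (l + k)) * k ! = (n + k)! := by
  induction n with
  | zero => simp
  | succ n ih =>
    rw [Finset.prod_Icc_succ_top (by lia), mul_right_comm, ih, Nat.add_right_comm,
      Nat.factorial_succ, mul_comm]

variable {K : Type*} [Field K] [LinearOrder K] [IsStrictOrderedRing K]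

lemma prod_erase_abs_sub_mul_self {k n : ℕ} (hk : k ∈ Finset.Icc 1 n) :
    (∏ l ∈ (Finset.Icc 1 n).erase k, |(l : K) - k|) * k = k ! * (n - k)! := by
  obtain ⟨hk1, hkn⟩ := Finset.mem_Icc.1 hk
  induction n, hkn using Nat.le_induction with
  | base =>
    have herase : (Finset.Icc 1 k).erase k = Finset.Ico 1 k := by grind
    have hreflect : ∏ l ∈ Finset.Ico 1 k, |(l : K) - k| = ∏ l ∈ Finset.Ico 1 k, (l : K) := by
      refine Finset.prod_nbij' (k - ·) (k - ·) (by grind) (by grind) (by grind) (by grind)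
        fun l hl => ?_
      rw [abs_sub_comm, ← Nat.cast_sub (by grind), Nat.abs_cast]
    rw [herase, hreflect, ← Nat.cast_prod, ← Nat.cast_mul, ← Finset.prod_Ico_succ_top hk1,
      Finset.prod_Ico_id_eq_factorial]
    simp
  | succ n hkn ih =>
    have herase : (Finset.Icc 1 (n + 1)).erase k = insert (n + 1) ((Finset.Icc 1 n).erase k) := by
      grind
    have hfactor : |((n + 1 : ℕ) : K) - k| = ((n - k + 1 : ℕ) : K) := by
      rw [← Nat.cast_sub (by lia), Nat.abs_cast, Nat.sub_add_comm hkn]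
    rw [herase, Finset.prod_insert (by simp), mul_assoc, ih (Finset.mem_Icc.2 ⟨hk1, hkn⟩), hfactor,
      Nat.sub_add_comm hkn, Nat.factorial_succ]
    push_cast
    ring

lemma prod_erase_sq_div_abs_sq_sub_sq {k n : ℕ} (hk : k ∈ Finset.Icc 1 n) :
    ∏ l ∈ (Finset.Icc 1 n).erase k, ((l : K) ^ 2 / |(l : K) ^ 2 - (k : K) ^ 2|) =
      2 * (n ! * n !) / ((n - k)! * (n + k)!) := by
  have hnum : (∏ l ∈ (Finset.Icc 1 n).erase k, (l : K)) * k = n ! := by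
    rw [Finset.prod_erase_mul _ _ hk, ← Nat.cast_prod, ← Finset.prod_Ico_id_eq_factorial,
      Finset.Ico_add_one_right_eq_Icc]
  have hsub := prod_erase_abs_sub_mul_self (K := K) hk
  have hadd : (∏ l ∈ (Finset.Icc 1 n).erase k, ((l : K) + k)) * (2 * k) * k ! = (n + k)! := by
    rw [two_mul, Finset.prod_erase_mul _ (fun l : ℕ => (l : K) + k) hk]
    exact_mod_cast prod_Icc_add_mul_factorial k n
  have hfactor (l : ℕ) : |(l : K) ^ 2 - (k : K) ^ 2| = |(l : K) - k| * (l + k) := by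
    rw [sq_sub_sq, abs_mul, mul_comm, abs_of_nonneg (by positivity : (0 : K) ≤ l + k)]
  have hk0 : (k : K) ≠ 0 := Nat.cast_ne_zero.2 (by grind)
  simp only [hfactor, Finset.prod_div_distrib, Finset.prod_mul_distrib, Finset.prod_pow]
  have hk_fact : (k ! : K) ≠ 0 := by positivity
  rw [eq_div_of_mul_eq hk0 hnum, eq_div_of_mul_eq hk0 hsub, ← hadd]
  set S := ∏ l ∈ (Finset.Icc 1 n).erase k, ((l : K) + k)
  field_simp

lemma prod_erase_sq_div_abs_sq_sub_sq_le_two {k n : ℕ} (hk : k ∈ Finset.Icc 1 n) :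
    ∏ l ∈ (Finset.Icc 1 n).erase k, ((l : K) ^ 2 / |(l : K) ^ 2 - (k : K) ^ 2|) ≤ 2 := by
  rw [prod_erase_sq_div_abs_sq_sub_sq hk, div_le_iff₀ (by positivity)]
  refine mul_le_mul_of_nonneg_left ?_ zero_le_two
  exact_mod_cast
    factorial_mul_factorial_le_factorial_sub_mul_factorial_add (Finset.mem_Icc.1 hk).2

lemma one_sub_pow_le_natCast_mul {z : K} (hz : 0 ≤ z) (m : ℕ) : 1 - z ^ m ≤ m * (1 - z) := by
  have bernoulli := one_add_mul_le_pow (a := z - 1) (by linarith) m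
  rw [add_sub_cancel] at bernoulli
  linarith

lemma pow_mul_natCast_mul_le_one_sub_pow {z : K} (hz0 : 0 ≤ z) (hz1 : z ≤ 1) (m : ℕ) :
    z ^ m * (m * (1 - z)) ≤ 1 - z ^ m := by
  have hterms : m • z ^ m ≤ ∑ i ∈ Finset.range m, z ^ i := by
    simpa using Finset.card_nsmul_le_sum (Finset.range m) (fun i => z ^ i) (z ^ m)
      fun i hi => pow_le_pow_of_le_one hz0 hz1 (Finset.mem_range.1 hi).le
  calc z ^ m * (m * (1 - z)) = m • z ^ m * (1 - z) := by rw [nsmul_eq_mul]; ring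
    _ ≤ (∑ i ∈ Finset.range m, z ^ i) * (1 - z) :=
        mul_le_mul_of_nonneg_right hterms (sub_nonneg.2 hz1)
    _ = 1 - z ^ m := geom_sum_mul_neg z m

lemma pow_mul_abs_sub_mul_le_abs_pow_sub_pow {z : K} (hz0 : 0 ≤ z) (hz1 : z ≤ 1) {i j N : ℕ}
    (hi : i ≤ N) (hj : j ≤ N) : z ^ N * (|(j : K) - i| * (1 - z)) ≤ |z ^ i - z ^ j| := by
  wlog hij : i ≤ j generalizing i j
  · rw [abs_sub_comm, abs_sub_comm (z ^ i)]
    exact this hj hi (le_of_not_ge hij)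
  obtain ⟨m, rfl⟩ := Nat.exists_eq_add_of_le hij
  have : 0 ≤ 1 - z := sub_nonneg.2 hz1
  calc z ^ N * (|((i + m : ℕ) : K) - i| * (1 - z))
      = z ^ N * (m * (1 - z)) := by simp
    _ ≤ z ^ (i + m) * (m * (1 - z)) := by
        gcongr ?_ * _
        exact pow_le_pow_of_le_one hz0 hz1 hj
    _ = z ^ i * (z ^ m * (m * (1 - z))) := by ring
    _ ≤ z ^ i * (1 - z ^ m) := by
        gcongr
        exact pow_mul_natCast_mul_le_one_sub_pow hz0 hz1 m
    _ = z ^ i - z ^ (i + m) := by ring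
    _ ≤ |z ^ i - z ^ (i + m)| := le_abs_self _

lemma abs_one_sub_pow_div_pow_sub_pow_le {z : K} (hz0 : 0 < z) (hz1 : z < 1) {i j N : ℕ}
    (hi : i ≤ N) (hj : j ≤ N) (hij : i ≠ j) :
    |(1 - z ^ j) / (z ^ i - z ^ j)| ≤ (z ^ N)⁻¹ * (j / |(j : K) - i|) := by
  have : 0 < 1 - z := sub_pos.2 hz1
  have hdist : 0 < |(j : K) - i| := abs_pos.2 (sub_ne_zero.2 (Nat.cast_injective.ne hij.symm))
  have hnonneg : 0 ≤ 1 - z ^ j := sub_nonneg.2 (pow_le_one₀ hz0.le hz1.le)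
  rw [abs_div, abs_of_nonneg hnonneg]
  calc (1 - z ^ j) / |z ^ i - z ^ j|
      ≤ j * (1 - z) / (z ^ N * (|(j : K) - i| * (1 - z))) :=
        div_le_div₀ (by positivity) (one_sub_pow_le_natCast_mul hz0.le j) (by positivity)
          (pow_mul_abs_sub_mul_le_abs_pow_sub_pow hz0.le hz1.le hi hj)
    _ = (z ^ N)⁻¹ * (j / |(j : K) - i|) := by field_simp

/- Each of the `n - 1` factors of the basis polynomial costs `(z ^ n²)⁻¹` when the geometric nodes
are replaced by the nodes `k²`, for which the product is at most `2`. -/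
lemma abs_eval_one_basis_pow_sq_le {z : K} (hz0 : 0 < z) (hz1 : z < 1) {k n : ℕ}
    (hk : k ∈ Finset.Icc 1 n) :
    |(Lagrange.basis (Finset.Icc 1 n) (fun l => z ^ l ^ 2) k).eval 1| ≤ 2 * (z ^ n ^ 3)⁻¹ := by
  have hfactor : ∀ l ∈ (Finset.Icc 1 n).erase k,
      |(Lagrange.basisDivisor (z ^ k ^ 2) (z ^ l ^ 2)).eval 1| ≤
        (z ^ n ^ 2)⁻¹ * ((l : K) ^ 2 / |(l : K) ^ 2 - (k : K) ^ 2|) := by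
    intro l hl
    have hne : k ^ 2 ≠ l ^ 2 := (Nat.pow_left_injective two_ne_zero).ne (by grind)
    have hkn : k ≤ n := by grind
    have hln : l ≤ n := by grind
    simpa [Lagrange.basisDivisor, div_eq_inv_mul] using abs_one_sub_pow_div_pow_sub_pow_le hz0 hz1
      (Nat.pow_le_pow_left hkn 2) (Nat.pow_le_pow_left hln 2) hne
  rw [Lagrange.basis, Polynomial.eval_prod, Finset.abs_prod]
  calc ∏ l ∈ (Finset.Icc 1 n).erase k, |(Lagrange.basisDivisor (z ^ k ^ 2) (z ^ l ^ 2)).eval 1|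
      ≤ ∏ l ∈ (Finset.Icc 1 n).erase k,
          ((z ^ n ^ 2)⁻¹ * ((l : K) ^ 2 / |(l : K) ^ 2 - (k : K) ^ 2|)) :=
        Finset.prod_le_prod (fun _ _ => abs_nonneg _) hfactor
    _ = (z ^ (n ^ 2 * (n - 1)))⁻¹ *
          ∏ l ∈ (Finset.Icc 1 n).erase k, ((l : K) ^ 2 / |(l : K) ^ 2 - (k : K) ^ 2|) := by
        rw [Finset.prod_mul_distrib, Finset.prod_const, Finset.card_erase_of_mem hk, Nat.card_Icc,
          Nat.add_sub_cancel, inv_pow, ← pow_mul]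
    _ ≤ (z ^ n ^ 3)⁻¹ * 2 := by
        gcongr ?_⁻¹ * ?_
        · exact pow_le_pow_of_le_one hz0.le hz1.le
            (pow_succ n 2 ▸ Nat.mul_le_mul_left _ (Nat.sub_le n 1))
        · exact prod_erase_sq_div_abs_sq_sub_sq_le_two hk
    _ = 2 * (z ^ n ^ 3)⁻¹ := mul_comm _ _

lemma abs_eval_le_of_forall_abs_basis_le {ι : Type*} [DecidableEq ι] {s : Finset ι} {v : ι → K}
    (hv : Set.InjOn v s) {p : K[X]} (hp : p.degree < s.card) {x B δ : K}
    (hB : ∀ i ∈ s, |(Lagrange.basis s v i).eval x| ≤ B) (hδ : ∀ i ∈ s, |p.eval (v i)| ≤ δ) :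
    |p.eval x| ≤ s.card * (δ * B) := by
  have hinterp := congrArg (Polynomial.eval x) (Lagrange.eq_interpolate hv hp)
  simp only [Lagrange.interpolate_apply, Polynomial.eval_finsetSum, Polynomial.eval_mul,
    Polynomial.eval_C] at hinterp
  calc |p.eval x| ≤ ∑ i ∈ s, |p.eval (v i) * (Lagrange.basis s v i).eval x| := by
        rw [hinterp]
        exact Finset.abs_sum_le_sum_abs _ _
    _ ≤ ∑ _i ∈ s, δ * B := by
        refine Finset.sum_le_sum fun i hi => ?_
        rw [abs_mul]
        exact mul_le_mul (hδ i hi) (hB i hi) (abs_nonneg _) ((abs_nonneg _).trans (hδ i hi))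
    _ = s.card * (δ * B) := by simp

lemma abs_eval_one_le_of_forall_abs_eval_pow_sq_le {z : K} (hz0 : 0 < z) (hz1 : z < 1)
    {p : K[X]} {n : ℕ} (hp : p.natDegree < n) {δ : K}
    (hδ : ∀ k ∈ Finset.Icc 1 n, |p.eval (z ^ k ^ 2)| ≤ δ) :
    |p.eval 1| ≤ n * (δ * (2 * (z ^ n ^ 3)⁻¹)) := by
  have hinj : Function.Injective fun k : ℕ => z ^ k ^ 2 :=
    (pow_right_strictAnti₀ hz0 hz1).injective.comp (Nat.pow_left_injective two_ne_zero)
  have hdeg : p.degree < (Finset.Icc 1 n).card := by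
    rw [Nat.card_Icc, Nat.add_sub_cancel]
    exact Polynomial.degree_le_natDegree.trans_lt (Nat.cast_lt.2 hp)
  simpa using abs_eval_le_of_forall_abs_basis_le hinj.injOn hdeg
    (fun k hk => abs_eval_one_basis_pow_sq_le hz0 hz1 hk) hδ

end Extrapolation

section MulClose

lemma MulClose.refl (u : ℝ) : MulClose 0 u u := by
  rcases eq_or_ne u 0 with rfl | hu
  · exact Or.inl ⟨rfl, rfl⟩
  · exact Or.inr ⟨mul_self_pos.2 hu, by simp [hu], by simp [hu]⟩

lemma MulClose.symm {ν u v : ℝ} (h : MulClose ν u v) : MulClose ν v u := by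
  rcases h with ⟨hu, hv⟩ | ⟨hpos, hlower, hupper⟩
  · exact Or.inl ⟨hv, hu⟩
  · have hratio : 0 < u / v := (Real.exp_pos _).trans_le hlower
    refine Or.inr ⟨by rwa [mul_comm], ?_, ?_⟩
    · rw [← inv_div, Real.exp_neg]
      exact inv_anti₀ hratio hupper
    · rw [← inv_div, ← inv_inv (Real.exp ν), ← Real.exp_neg]
      exact inv_anti₀ (Real.exp_pos _) hlower

lemma MulClose.trans {ν₁ ν₂ u v w : ℝ} (huv : MulClose ν₁ u v) (hvw : MulClose ν₂ v w) :
    MulClose (ν₁ + ν₂) u w := by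
  rcases huv with ⟨hu, hv⟩ | ⟨huv_pos, huv_lower, huv_upper⟩ <;>
    rcases hvw with ⟨hv', hw⟩ | ⟨hvw_pos, hvw_lower, hvw_upper⟩
  · exact Or.inl ⟨hu, hw⟩
  · simp [hv] at hvw_pos
  · simp [hv'] at huv_pos
  · have hv : v ≠ 0 := left_ne_zero_of_mul hvw_pos.ne'
    have hratio : u / w = u / v * (v / w) := (div_mul_div_cancel₀ hv).symm
    have huv_nonneg : 0 ≤ u / v := (Real.exp_pos _).le.trans huv_lower
    have hvw_nonneg : 0 ≤ v / w := (Real.exp_pos _).le.trans hvw_lower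
    refine Or.inr ⟨?_, ?_, ?_⟩
    · refine pos_of_mul_pos_left ?_ (mul_self_nonneg v)
      linear_combination mul_pos huv_pos hvw_pos
    · rw [hratio, neg_add, Real.exp_add]
      gcongr
    · rw [hratio, Real.exp_add]
      gcongr

lemma MulClose.of_forall_succ {ν : ℝ} {f : ℕ → ℝ} {N : ℕ}
    (h : ∀ j < N, MulClose ν (f j) (f (j + 1))) : MulClose (N * ν) (f 0) (f N) := by
  induction N with
  | zero => simpa using MulClose.refl (f 0)
  | succ N ih =>
    have := (ih fun j hj => h j (hj.trans N.lt_succ_self)).trans (h N N.lt_succ_self)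
    rwa [← add_one_mul, ← Nat.cast_succ] at this

lemma two_sub_exp_le_exp_neg (t : ℝ) : 2 - Real.exp t ≤ Real.exp (-t) := by
  linarith [Real.one_le_cosh t, Real.cosh_eq t]

lemma MulClose.abs_sub_le {ν u v : ℝ} (h : MulClose ν u v) :
    |u - v| ≤ (Real.exp ν - 1) * |v| := by
  rcases h with ⟨rfl, rfl⟩ | ⟨hpos, hlower, hupper⟩
  · simp
  have hv : v ≠ 0 := right_ne_zero_of_mul hpos.ne'
  have hratio : |u / v - 1| ≤ Real.exp ν - 1 :=
    abs_le.2 ⟨by linarith [two_sub_exp_le_exp_neg ν], by linarith⟩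
  calc |u - v| = |u / v - 1| * |v| := by rw [← abs_mul, sub_one_mul, div_mul_cancel₀ u hv]
    _ ≤ (Real.exp ν - 1) * |v| := by gcongr

lemma mulClose_one_of_abs_sub_le_half {u v : ℝ} (h : |u - v| ≤ |v| / 2) : MulClose 1 u v := by
  rcases eq_or_ne v 0 with rfl | hv
  · exact Or.inl ⟨by simpa using h, rfl⟩
  have hratio : |u / v - 1| ≤ 1 / 2 := by
    rwa [div_sub_one hv, abs_div, div_le_iff₀ (abs_pos.2 hv), one_div_mul_eq_div]
  have hexp : 2 ≤ Real.exp 1 := by linarith [Real.add_one_le_exp 1]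
  obtain ⟨hlower, hupper⟩ := abs_le.1 hratio
  have hpos : 0 < u * v := by
    rw [← div_mul_cancel₀ u hv, mul_assoc]
    exact mul_pos (by linarith) (mul_self_pos.2 hv)
  refine Or.inr ⟨hpos, ?_, by linarith⟩
  calc Real.exp (-1) ≤ 2⁻¹ := Real.exp_neg 1 ▸ inv_anti₀ two_pos hexp
    _ ≤ u / v := by linarith

end MulClose

lemma exp_sub_one_le_of_le_one_div {M t : ℝ} (hM : 1 ≤ M) (ht : t ≤ 1 / (12 * M)) :
    Real.exp t - 1 ≤ 1 / (8 * M) := by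
  set s := 1 / (12 * M) with hs
  have hs_pos : 0 < s := by positivity
  have hs_le : s ≤ 1 / 12 := by
    rw [hs]
    gcongr
    linarith
  have hexp : |Real.exp s - 1 - s| ≤ s ^ 2 :=
    Real.abs_exp_sub_one_sub_id_le (by rw [abs_of_pos hs_pos]; linarith)
  calc Real.exp t - 1 ≤ Real.exp s - 1 := by gcongr
    _ ≤ s + s ^ 2 := by linarith [(abs_le.1 hexp).2]
    _ ≤ 3 / 2 * s := by nlinarith
    _ = 1 / (8 * M) := by rw [hs]; field_simp; norm_num

lemma abs_sub_le_of_forall_mulClose_succ {f : ℕ → ℝ} {M : ℕ} (hM : 1 ≤ M) {γ : ℝ}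
    (hγ : γ ≤ 1 / (12 * M ^ 3))
    (hclose : ∀ j, 1 ≤ j → j + 1 ≤ M ^ 2 → MulClose γ (f j) (f (j + 1)))
    {j : ℕ} (hj1 : 1 ≤ j) (hj : j ≤ M ^ 2) : |f j - f 1| ≤ 1 / (8 * M) * |f 1| := by
  obtain ⟨i, rfl⟩ := Nat.exists_eq_add_of_le' hj1
  have hchain : MulClose (i * γ) (f 1) (f (i + 1)) :=
    MulClose.of_forall_succ (f := fun i => f (i + 1)) fun l hl =>
      hclose (l + 1) (by lia) (by lia)
  have hsmall : i * γ ≤ 1 / (12 * M) :=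
    calc i * γ ≤ i * (1 / (12 * M ^ 3)) := by gcongr
      _ ≤ M ^ 2 * (1 / (12 * M ^ 3)) := by gcongr; exact_mod_cast i.le_succ.trans hj
      _ = 1 / (12 * M) := by field_simp
  refine hchain.symm.abs_sub_le.trans ?_
  gcongr
  exact exp_sub_one_le_of_le_one_div (by exact_mod_cast hM) hsmall

lemma mulClose_eval_one_of_forall_mulClose {q : Polynomial ℝ} {M : ℕ} (hq : q.natDegree < M)
    {z : ℝ} (hz0 : 0 < z) (hz1 : z ≤ 1) (hz : 1 / 2 ≤ z ^ M ^ 3) {γ : ℝ}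
    (hγ : γ ≤ 1 / (12 * M ^ 3)) (hclose : ∀ j : ℕ, 1 ≤ j → j + 1 ≤ M ^ 2 →
      MulClose γ (q.eval (z ^ j)) (q.eval (z ^ (j + 1)))) :
    MulClose 1 (q.eval 1) (q.eval z) := by
  rcases hz1.eq_or_lt with rfl | hz1
  · exact mulClose_one_of_abs_sub_le_half (by rw [sub_self, abs_zero]; positivity)
  have hM : 1 ≤ M := Nat.one_le_of_lt hq
  have hnodes : ∀ k ∈ Finset.Icc 1 M,
      |(q - Polynomial.C (q.eval z)).eval (z ^ k ^ 2)| ≤ 1 / (8 * M) * |q.eval z| := by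
    intro k hk
    rw [Finset.mem_Icc] at hk
    rw [Polynomial.eval_sub, Polynomial.eval_C]
    have hnear := abs_sub_le_of_forall_mulClose_succ hM hγ hclose
      (Nat.one_le_pow 2 k hk.1) (Nat.pow_le_pow_left hk.2 2)
    rwa [pow_one] at hnear
  have hinv : (z ^ M ^ 3)⁻¹ ≤ 2 := inv_le_of_inv_le₀ two_pos (by rwa [← one_div])
  apply mulClose_one_of_abs_sub_le_half
  calc |q.eval 1 - q.eval z| = |(q - Polynomial.C (q.eval z)).eval 1| := by simp
    _ ≤ M * (1 / (8 * M) * |q.eval z| * (2 * (z ^ M ^ 3)⁻¹)) :=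
      abs_eval_one_le_of_forall_abs_eval_pow_sq_le hz0 hz1
        (by rwa [Polynomial.natDegree_sub_C]) hnodes
    _ ≤ M * (1 / (8 * M) * |q.eval z| * (2 * 2)) := by gcongr
    _ = |q.eval z| / 2 := by field_simp; ring

lemma half_le_sqrt_pow {a : ℝ} {N : ℕ} (ha : a ≤ 1) (hb : 1 - a ≤ 1 / (2 * N)) :
    1 / 2 ≤ √a ^ N := by
  have hsqrt : a ≤ √a := Real.le_sqrt_self_iff.2 ha
  have hNb : N * (1 - a) ≤ 1 / 2 := by
    rcases eq_or_ne N 0 with rfl | hN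
    · simp
    · calc N * (1 - a) ≤ N * (1 / (2 * N)) := by gcongr
        _ = 1 / 2 := by field_simp
  have hpow : 1 - √a ^ N ≤ 1 / 2 :=
    calc 1 - √a ^ N ≤ N * (1 - √a) := one_sub_pow_le_natCast_mul (Real.sqrt_nonneg a) N
      _ ≤ N * (1 - a) := by gcongr
      _ ≤ 1 / 2 := hNb
  linarith

theorem noise_insensitivity_extension_general {n m : ℕ} {r : MvPolynomial (Fin n) ℝ}
    (hr : r.totalDegree ≤ m) {a : ℝ} (ha : a ≤ 1) (hb : 1 - a ≤ 1 / (2 * (m + 1) ^ 3)) {γ : ℝ}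
    (hγ : γ ≤ 1 / (12 * (m + 1) ^ 3)) {x : Fin n → ℝ}
    (hclose : ∀ j : ℕ, 1 ≤ j → j + 1 ≤ (m + 1) ^ 2 →
      MulClose γ (noiseOpP (a ^ ((j : ℝ) / 2)) r x) (noiseOpP (a ^ (((j : ℝ) + 1) / 2)) r x)) :
    MulClose 1 (eval x r) (noiseOpP (a ^ ((1 : ℝ) / 2)) r x) := by
  obtain ⟨q, hq, hq1, hnoise⟩ := exists_noiseOpP_eq_eval hr x
  have hz : 1 / 2 ≤ √a ^ (m + 1) ^ 3 := half_le_sqrt_pow ha (by exact_mod_cast hb)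
  have ha0 : 0 < a := by
    by_contra! ha0
    norm_num [Real.sqrt_eq_zero_of_nonpos ha0] at hz
  have hpow (j : ℕ) : a ^ ((j : ℝ) / 2) = √a ^ j := by
    rw [Real.rpow_div_two_eq_sqrt _ ha0.le, Real.rpow_natCast]
  rw [← Real.sqrt_eq_rpow, ← hq1, hnoise]
  refine mulClose_eval_one_of_forall_mulClose (Nat.lt_succ_of_le hq) (Real.sqrt_pos.2 ha0)
    (Real.sqrt_le_one.2 ha) hz (by exact_mod_cast hγ) fun j hj hjm => ?_
  simpa only [← Nat.cast_succ, hpow, hnoise] using hclose j hj hjm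

lemma one_div_mul_pow_le_one_div_two_mul_add_one_pow {d : ℕ} (hd : 1 ≤ d) :
    1 / (54 * (d : ℝ) ^ 10) ≤ 1 / (2 * (2 * d + 1) ^ 3) := by
  have hd' : (1 : ℝ) ≤ d := by exact_mod_cast hd
  apply one_div_le_one_div_of_le (by positivity)
  calc 2 * (2 * (d : ℝ) + 1) ^ 3 ≤ 2 * (3 * d) ^ 3 := by gcongr; linarith
    _ = 54 * (d : ℝ) ^ 3 := by ring
    _ ≤ 54 * (d : ℝ) ^ 10 := by
      gcongr
      norm_num

/-- Noise insensitivity extension lemma: there is a universal constant `C` such that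
for `d ≥ 1`, `D = (2d+1)²`, a nonnegative polynomial `r₀` of degree at most `2d`,
`a + b = 1` with `0 ≤ b ≤ 1/(C·d^{10})`, and `r_j = U_{a^{j/2}} r₀`, if at a point `x`
we have `r_j(x) ≈_γ r_{j+1}(x)` for all `1 ≤ j ≤ D−1` where
`0 ≤ γ ≤ 1/(12·D·(2d+1))`, then `r₀(x) ≈_1 r₁(x)`. -/
theorem noise_insensitivity_extension :
    ∃ C : ℝ, 1 ≤ C ∧
      ∀ (n d : ℕ), 1 ≤ d →
      ∀ r₀ : MvPolynomial (Fin n) ℝ, r₀.totalDegree ≤ 2 * d →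
      (∀ x, 0 ≤ eval x r₀) →
      ∀ a b : ℝ, 0 ≤ a → 0 ≤ b → a + b = 1 → b ≤ 1 / (C * (d : ℝ) ^ 10) →
      ∀ γ : ℝ, 0 ≤ γ → γ ≤ 1 / (12 * ((2 * d + 1) ^ 2) * (2 * d + 1)) →
      ∀ x : Fin n → ℝ,
      (∀ j : ℕ, 1 ≤ j → j + 1 ≤ (2 * d + 1) ^ 2 →
        MulClose γ (noiseOpP (a ^ ((j : ℝ) / 2)) r₀ x)
          (noiseOpP (a ^ (((j : ℝ) + 1) / 2)) r₀ x)) →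
      MulClose 1 (eval x r₀) (noiseOpP (a ^ ((1 : ℝ) / 2)) r₀ x) := by
  refine ⟨54, by norm_num, fun n d hd r₀ hr _ a b _ hb hab hbd γ _ hγ x hclose => ?_⟩
  have hb' := hbd.trans (one_div_mul_pow_le_one_div_two_mul_add_one_pow hd)
  refine noise_insensitivity_extension_general hr (by linarith) ?_ ?_ hclose
  · push_cast
    linarith
  · push_cast
    rwa [pow_succ, ← mul_assoc]
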